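/- Let p, m be natural numbers with m ≤ p, let H : Matrix (Fin p) (Fin m) ℝ satisfy Hᵀ * H = 1, let d : Fin m → ℝ with d i > 0 for all i, and let B : Matrix (Fin p) (Fin p) ℝ. Set A⁺ = H * Matrix.diagonal (fun i => (d i)⁻¹) * Hᵀ and E = Matrix.diagonal (fun i => (Real.sqrt (d i))⁻¹). Then (B * A⁺).charpoly = T^(p - m) * (E * Hᵀ * B * H * E).charpoly; in particular the nonzero eigenvalues of B A⁺ coincide (with multiplicity) with those of L^{-1/2} Hᵀ B H L^{-1/2}, i.e. with the eigenvalues Λ of the generalized eigenvalue problem B e = λ A e. -/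

import Mathlib

open Matrix Polynomial

theorem charpoly_mul_mul_mul_of_card_le {R n k l : Type*} [CommRing R]
    [Fintype n] [DecidableEq n] [Fintype k] [Fintype l] [DecidableEq l]
    (hcard : Fintype.card l ≤ Fintype.card n) (B : Matrix n n R) (H : Matrix n k R)
    (F : Matrix k l R) (E : Matrix l k R) (K : Matrix k n R) :
    (B * (H * (F * E) * K)).charpoly =
      X ^ (Fintype.card n - Fintype.card l) * (E * K * B * H * F).charpoly := by
  simpa only [Matrix.mul_assoc] using charpoly_mul_comm_of_le (B * H * F) (E * K) hcard

theorem diagonal_inv_sqrt_mul_self {k : Type*} [Fintype k] [DecidableEq k]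
    {d : k → ℝ} (hd : ∀ i, 0 ≤ d i) :
    diagonal (fun i => (√(d i))⁻¹) * diagonal (fun i => (√(d i))⁻¹) =
      diagonal fun i => (d i)⁻¹ := by
  simp only [diagonal_mul_diagonal, ← mul_inv, Real.mul_self_sqrt (hd _)]

theorem charpoly_B_pseudoinverse_general {n k : Type*}
    [Fintype n] [DecidableEq n] [Fintype k] [DecidableEq k]
    (hcard : Fintype.card k ≤ Fintype.card n) (H : Matrix n k ℝ)
    {d : k → ℝ} (hd : ∀ i, 0 < d i) (B : Matrix n n ℝ) :
    (B * (H * diagonal (fun i => (d i)⁻¹) * Hᵀ)).charpoly =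
      X ^ (Fintype.card n - Fintype.card k) *
        (diagonal (fun i => (√(d i))⁻¹) * Hᵀ * B * H *
          diagonal fun i => (√(d i))⁻¹).charpoly := by
  rw [← diagonal_inv_sqrt_mul_self fun i => (hd i).le]
  exact charpoly_mul_mul_mul_of_card_le hcard B H _ _ Hᵀ

theorem charpoly_B_pseudoinverse
    (p m : ℕ) (hmp : m ≤ p)
    (H : Matrix (Fin p) (Fin m) ℝ) (hH : Hᵀ * H = 1)
    (d : Fin m → ℝ) (hd : ∀ i, d i > 0)
    (B : Matrix (Fin p) (Fin p) ℝ)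
    (Aplus : Matrix (Fin p) (Fin p) ℝ)
    (hAplus : Aplus = H * Matrix.diagonal (fun i => (d i)⁻¹) * Hᵀ)
    (E : Matrix (Fin m) (Fin m) ℝ)
    (hE : E = Matrix.diagonal (fun i => (Real.sqrt (d i))⁻¹)) :
    (B * Aplus).charpoly = Polynomial.X ^ (p - m) * (E * Hᵀ * B * H * E).charpoly := by
  subst hAplus hE
  simpa only [Fintype.card_fin] using
    charpoly_B_pseudoinverse_general (by simpa only [Fintype.card_fin] using hmp) H hd B
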